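/- (Pointwise estimate on the traced and commutator products with the principal direction; flat-ambient case of the first reaction-term bound.) One has Σ_{β=1}^{k} (tr(S B_β))² + Σ_{β=1}^{k} ‖S B_β − B_β S‖² ≤ 2‖S‖² Σ_{β=1}^{k} ‖B_β‖². -/

import Mathlib

/-!
The estimate holds for each `β` separately. Both sides are invariant under simultaneous orthogonal
conjugation of `S` and `B β`, so the spectral theorem allows `S = diag(d)`. Writing `C` for the
conjugated `B β`, the trace term is `(∑ i, d i * C i i) ^ 2 ≤ ‖d‖² ∑ i, (C i i) ^ 2` by
Cauchy–Schwarz, and it involves only the diagonal of `C`. The commutator has entries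
`(d i - d j) * C i j`, which vanish on the diagonal, while off the diagonal
`(d i - d j) ^ 2 ≤ 2 * (d i ^ 2 + d j ^ 2) ≤ 2 * ‖d‖²`. The two contributions live on complementary
entries of `C`, so they add up to at most `2 * ‖d‖² * ‖C‖²`.
-/

open Finset

/-- Squared Frobenius norm of a real matrix. -/
def frobSq {m : ℕ} (M : Matrix (Fin m) (Fin m) ℝ) : ℝ := ∑ i, ∑ j, (M i j) ^ 2

open Matrix in
lemma frobSq_eq_trace {m : ℕ} (M : Matrix (Fin m) (Fin m) ℝ) : frobSq M = (M * Mᵀ).trace := by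
  simp [frobSq, Matrix.trace, Matrix.mul_apply, sq]

open Matrix in
lemma frobSq_conj {m : ℕ} (U M : Matrix (Fin m) (Fin m) ℝ) (hU : Uᵀ * U = 1) :
    frobSq (U * M * Uᵀ) = frobSq M := by
  rw [frobSq_eq_trace, frobSq_eq_trace]
  have h : U * M * Uᵀ * (U * M * Uᵀ)ᵀ = U * (M * Mᵀ * Uᵀ) := by
    calc U * M * Uᵀ * (U * M * Uᵀ)ᵀ = U * M * (Uᵀ * U) * Mᵀ * Uᵀ := by
          simp only [Matrix.transpose_mul, Matrix.transpose_transpose, Matrix.mul_assoc]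
      _ = _ := by rw [hU]; simp only [Matrix.mul_one, Matrix.mul_assoc]
  rw [h, Matrix.trace_mul_comm, Matrix.mul_assoc, hU, Matrix.mul_one]

open Matrix in
lemma exists_orthogonal_diagonalization {m : ℕ} (S : Matrix (Fin m) (Fin m) ℝ) (hS : S.IsSymm) :
    ∃ (U : Matrix (Fin m) (Fin m) ℝ) (d : Fin m → ℝ),
      Uᵀ * U = 1 ∧ U * Uᵀ = 1 ∧ S = U * diagonal d * Uᵀ := by
  have hH : S.IsHermitian := by
    rw [Matrix.IsHermitian, Matrix.conjTranspose_eq_transpose_of_trivial]; exact hS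
  have hstar : star (hH.eigenvectorUnitary : Matrix (Fin m) (Fin m) ℝ)
      = (hH.eigenvectorUnitary : Matrix (Fin m) (Fin m) ℝ)ᵀ := by
    rw [Matrix.star_eq_conjTranspose, Matrix.conjTranspose_eq_transpose_of_trivial]
  refine ⟨hH.eigenvectorUnitary, hH.eigenvalues, ?_, ?_, ?_⟩
  · rw [← hstar]; exact Unitary.coe_star_mul_self _
  · rw [← hstar]; exact Unitary.coe_mul_star_self _
  · rw [← hstar]
    have h := hH.spectral_theorem
    rw [Unitary.conjStarAlgAut_apply] at h
    exact h

/-- The estimate for a single matrix, when `S` is diagonal. -/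
lemma diagonal_product_estimate {m : ℕ} (d : Fin m → ℝ) (C : Matrix (Fin m) (Fin m) ℝ) :
    (Matrix.trace (Matrix.diagonal d * C)) ^ 2
        + frobSq (Matrix.diagonal d * C - C * Matrix.diagonal d)
      ≤ 2 * frobSq (Matrix.diagonal d) * frobSq C := by
  have hD : frobSq (Matrix.diagonal d) = ∑ i, d i ^ 2 := by
    simp [frobSq, Matrix.diagonal_apply, ite_pow]
  have htr : (Matrix.trace (Matrix.diagonal d * C)) ^ 2 ≤ (∑ i, d i ^ 2) * ∑ i, C i i ^ 2 := by
    simp only [Matrix.trace, Matrix.diag_apply, Matrix.diagonal_mul]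
    exact Finset.sum_mul_sq_le_sq_mul_sq _ _ _
  have hN : 0 ≤ ∑ i, d i ^ 2 := Finset.sum_nonneg fun i _ => sq_nonneg _
  rw [hD]
  -- Rewriting the diagonal sum over all pairs `(i, j)` lets the estimate be checked entrywise.
  have hdiag : ∑ i, C i i ^ 2 = ∑ i, ∑ j, if i = j then C i j ^ 2 else 0 := by simp
  rw [hdiag, Finset.mul_sum] at htr
  refine (add_le_add_left htr _).trans ?_
  simp only [frobSq, Finset.mul_sum, ← Finset.sum_add_distrib]
  refine Finset.sum_le_sum fun i _ => Finset.sum_le_sum fun j _ => ?_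
  simp only [Matrix.sub_apply, Matrix.diagonal_mul, Matrix.mul_diagonal]
  simp only [← Finset.mul_sum]
  by_cases hij : i = j
  · subst hij
    simp only [if_true]
    nlinarith [mul_nonneg hN (sq_nonneg (C i i))]
  · have hpair : d i ^ 2 + d j ^ 2 ≤ ∑ l, d l ^ 2 := by
      rw [← Finset.sum_pair (f := fun l => d l ^ 2) hij]
      exact Finset.sum_le_sum_of_subset_of_nonneg (Finset.subset_univ _)
        fun l _ _ => sq_nonneg _
    have hsq : (d i - d j) ^ 2 ≤ 2 * ∑ l, d l ^ 2 := by nlinarith [sq_nonneg (d i + d j)]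
    rw [if_neg hij, mul_zero, zero_add]
    calc (d i * C i j - C i j * d j) ^ 2 = (d i - d j) ^ 2 * C i j ^ 2 := by ring
      _ ≤ _ := mul_le_mul_of_nonneg_right hsq (sq_nonneg _)

open Matrix in
/-- The estimate for a symmetric `S` and a single arbitrary matrix `B`, by reduction to diagonal
`S`. -/
lemma single_product_estimate {m : ℕ} (S B : Matrix (Fin m) (Fin m) ℝ) (hS : S.IsSymm) :
    (Matrix.trace (S * B)) ^ 2 + frobSq (S * B - B * S) ≤ 2 * frobSq S * frobSq B := by
  obtain ⟨U, d, h1, h2, rfl⟩ := exists_orthogonal_diagonalization S hS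
  obtain ⟨C, rfl⟩ : ∃ C, B = U * C * Uᵀ := by
    refine ⟨Uᵀ * B * U, ?_⟩
    calc B = (U * Uᵀ) * B * (U * Uᵀ) := by rw [h2, Matrix.one_mul, Matrix.mul_one]
      _ = _ := by simp only [Matrix.mul_assoc]
  have hmul : ∀ X Y : Matrix (Fin m) (Fin m) ℝ,
      U * X * Uᵀ * (U * Y * Uᵀ) = U * (X * Y) * Uᵀ := fun X Y => by
    calc U * X * Uᵀ * (U * Y * Uᵀ) = U * X * (Uᵀ * U) * Y * Uᵀ := by
          simp only [Matrix.mul_assoc]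
      _ = _ := by rw [h1]; simp only [Matrix.mul_one, Matrix.mul_assoc]
  have htr : ∀ X : Matrix (Fin m) (Fin m) ℝ, (U * X * Uᵀ).trace = X.trace := fun X => by
    rw [Matrix.trace_mul_comm, ← Matrix.mul_assoc, h1, Matrix.one_mul]
  rw [hmul, hmul, htr, ← Matrix.sub_mul, ← Matrix.mul_sub, frobSq_conj _ _ h1, frobSq_conj _ _ h1,
    frobSq_conj _ _ h1]
  exact diagonal_product_estimate d C

/-- **Pointwise estimate on the traced and commutator products with the principal
direction.** For a symmetric traceless matrix `S` and symmetric traceless matrices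
`B_1, …, B_k`, one has
`Σ_β (tr(S B_β))² + Σ_β ‖S B_β − B_β S‖² ≤ 2‖S‖² Σ_β ‖B_β‖²`. -/
theorem principal_direction_product_estimate
    (m k : ℕ) (hm : 1 ≤ m) (hk : 1 ≤ k)
    (S : Matrix (Fin m) (Fin m) ℝ) (hS : S.IsSymm) (hStr : S.trace = 0)
    (B : Fin k → Matrix (Fin m) (Fin m) ℝ)
    (hB : ∀ β, (B β).IsSymm) (hBtr : ∀ β, (B β).trace = 0) :
    (∑ β, (Matrix.trace (S * B β)) ^ 2) + (∑ β, frobSq (S * B β - B β * S))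
      ≤ 2 * frobSq S * ∑ β, frobSq (B β) := by
  rw [← Finset.sum_add_distrib, Finset.mul_sum]
  exact Finset.sum_le_sum fun β _ => single_product_estimate S (B β) hS
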